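/- Let m, k be positive integers with m ≥ 4 and m > k + 2. For z ∈ F_{2^k} define f^{(z)} : F_{2^m} × F_{2^m} → F_2 by f^{(z)}(x₁,x₂) = Tr_1^m(x₁ · x₂^{2^m − 2}) if Tr_1^k(z) = 0 and f^{(z)}(x₁,x₂) = Tr_1^m(x₂ · x₁^{2^m − 2}) if Tr_1^k(z) = 1, and define f : F_{2^m} × F_{2^m} × F_{2^k} × F_{2^k} → F_2 by f(x₁,x₂,y,z) = f^{(z)}(x₁,x₂) + Tr_1^k(yz). Then f is a bent function and every M-subspace of f has F_2-dimension strictly less than m + k. -/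

import Mathlib

/-- The second-order derivative `D_a D_b f (x) = f x + f (x+a) + f (x+b) + f (x+a+b)`. -/
def D2 {V : Type*} [AddCommGroup V] (f : V → ZMod 2) (a b x : V) : ZMod 2 :=
  f x + f (x + a) + f (x + b) + f (x + a + b)

/-- An `M`-subspace of `f` : a subspace on which all second-order derivatives of `f` vanish. -/
def IsMSubspace {V : Type*} [AddCommGroup V] [Module (ZMod 2) V] (f : V → ZMod 2)
    (U : Submodule (ZMod 2) V) : Prop :=
  ∀ a ∈ U, ∀ b ∈ U, ∀ x, D2 f a b x = 0

/-- A Boolean function on a finite `F₂`-vector space is bent if every nonzero derivative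
is balanced. -/
def IsBent {V : Type*} [AddCommGroup V] (f : V → ZMod 2) : Prop :=
  ∀ a : V, a ≠ 0 → ∀ c : ZMod 2,
    Nat.card {x : V // f (x + a) + f x = c} = Nat.card V / 2

/-- The absolute trace map of `F_{2^m}`. -/
noncomputable def Tr (m : ℕ) (x : GaloisField 2 m) : ZMod 2 :=
  Algebra.trace (ZMod 2) (GaloisField 2 m) x

/-!
Write `f (x, y, z) = g_z x + τ z y` with `x = (x₁, x₂)`, where `z` acts on `y` through a bijection
`τ` onto the dual space. Each derivative of `f` is balanced already along one coordinate: along `y`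
if the direction moves `z`, along `x` if it fixes `z` and moves `x` (as every `g_z` is bent), and
along `z` otherwise. So `f` is bent.

If `U` is an `M`-subspace of `f`, then `S = {x | (x, 0, 0) ∈ U}` has codimension at most `2 k` in
`U` and is an `M`-subspace of every `g_z`, that is, of both `Tr (x₁ x₂⁻¹)` and `Tr (x₂ x₁⁻¹)`.
Since second-order derivatives of the inversion map vanish only in dependent directions, the first
forces the projection of `S` to `x₂` to have dimension at most one, the second that to `x₁`. Hence
`dim U ≤ 2 k + 2 < m + k`.
-/

open Module

/-! ### Balanced functions -/

/-- A Boolean function on a finite set is balanced if it takes each value equally often. The factor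
`2` stands on the left so that no truncated division occurs. -/
def IsBalanced {V : Type*} (g : V → ZMod 2) : Prop :=
  ∀ c, 2 * Nat.card {x // g x = c} = Nat.card V

section Balanced

variable {V W : Type*}

theorem card_fiber_add_card_fiber_add_one [Finite V] (g : V → ZMod 2) (c : ZMod 2) :
    Nat.card {x // g x = c} + Nat.card {x // g x = c + 1} = Nat.card V := by
  classical
  have eq_add_one_iff_ne : ∀ u : ZMod 2, u = c + 1 ↔ ¬u = c := by revert c; decide
  simp only [eq_add_one_iff_ne, ← Nat.card_sum]
  exact Nat.card_congr (Equiv.sumCompl _)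

theorem isBalanced_of_perm_flip [Finite V] {g : V → ZMod 2} (e : Equiv.Perm V)
    (he : ∀ x, g (e x) = g x + 1) : IsBalanced g := fun c ↦ by
  have card_eq : Nat.card {x // g x = c} = Nat.card {x // g x = c + 1} :=
    Nat.card_congr (e.subtypeEquiv fun x ↦ by rw [he, add_left_inj])
  have card_add := card_fiber_add_card_fiber_add_one g c
  lia

theorem IsBalanced.comp_equiv {g : W → ZMod 2} (hg : IsBalanced g) (e : V ≃ W) :
    IsBalanced (g ∘ e) := fun c ↦ by
  rw [Nat.card_congr e, ← hg c]
  exact congrArg (2 * ·) (Nat.card_congr (e.subtypeEquiv fun _ ↦ Iff.rfl))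

theorem IsBalanced.add_const {g : V → ZMod 2} (hg : IsBalanced g) (c : ZMod 2) :
    IsBalanced fun x ↦ g x + c := fun d ↦ by
  simpa only [eq_sub_iff_add_eq] using hg (d - c)

theorem isBalanced_of_forall_snd [Finite V] [Finite W] {g : V × W → ZMod 2}
    (hg : ∀ v, IsBalanced fun w ↦ g (v, w)) : IsBalanced g := fun c ↦ by
  have := Fintype.ofFinite V
  calc 2 * Nat.card {p // g p = c}
      = 2 * ∑ v, Nat.card {w // g (v, w) = c} := by
        rw [← Nat.card_sigma]
        exact congrArg (2 * ·) (Nat.card_congr (Equiv.subtypeProdEquivSigmaSubtype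
          fun v w ↦ g (v, w) = c))
    _ = ∑ _v : V, Nat.card W := by rw [Finset.mul_sum, Finset.sum_congr rfl fun v _ ↦ hg v c]
    _ = Nat.card (V × W) := by simp

theorem isBalanced_of_forall_fst [Finite V] [Finite W] {g : V × W → ZMod 2}
    (hg : ∀ w, IsBalanced fun v ↦ g (v, w)) : IsBalanced g :=
  (isBalanced_of_forall_snd (g := g ∘ Prod.swap) hg).comp_equiv (Equiv.prodComm V W)

theorem isBalanced_of_dual_ne_zero [Finite V] [AddCommGroup V] [Module (ZMod 2) V]
    {φ : Dual (ZMod 2) V} (hφ : φ ≠ 0) : IsBalanced φ := by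
  obtain ⟨t, ht⟩ := LinearMap.surjective hφ 1
  exact isBalanced_of_perm_flip (Equiv.addRight t) fun x ↦ by simp [ht]

theorem isBalanced_equiv_dual_apply [Finite V] [AddCommGroup V] [Module (ZMod 2) V] [Finite W]
    (τ : W ≃ Dual (ZMod 2) V) {v : V} (hv : v ≠ 0) : IsBalanced fun w ↦ τ w v := by
  have := Finite.of_equiv W τ
  have eval_ne_zero : Dual.eval (ZMod 2) V v ≠ 0 := by
    rwa [Ne, eval_apply_eq_zero_iff]
  exact (isBalanced_of_dual_ne_zero eval_ne_zero).comp_equiv τ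

theorem isBent_iff_isBalanced [Finite V] [AddCommGroup V] {f : V → ZMod 2} :
    IsBent f ↔ ∀ a ≠ 0, IsBalanced fun x ↦ f (x + a) + f x := by
  refine forall₂_congr fun a _ ↦ ⟨fun h c ↦ ?_, fun h c ↦ by have := h c; lia⟩
  have card_add := card_fiber_add_card_fiber_add_one (fun x ↦ f (x + a) + f x) c
  have := h c
  have := h (c + 1)
  lia

theorem IsBent.comp_addEquiv [AddCommGroup V] [AddCommGroup W] {f : W → ZMod 2}
    (hf : IsBent f) (e : V ≃+ W) : IsBent (f ∘ e) := fun a ha c ↦ by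
  rw [Nat.card_congr e.toEquiv, ← hf (e a) (by simpa using ha) c]
  exact Nat.card_congr (e.toEquiv.subtypeEquiv fun x ↦ by simp)

end Balanced

/-! ### Subspaces -/

section Finrank

variable {K V W : Type*} [DivisionRing K] [AddCommGroup V] [Module K V] [AddCommGroup W]
  [Module K W] [FiniteDimensional K V] [FiniteDimensional K W]

theorem finrank_eq_finrank_map_snd_add_finrank_comap_inl (U : Submodule K (V × W)) :
    finrank K U = finrank K (U.map (LinearMap.snd K V W))
      + finrank K (U.comap (LinearMap.inl K V W)) := by
  have map_ker_eq : (LinearMap.ker ((LinearMap.snd K V W).domRestrict U)).map U.subtype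
      = (U.comap (LinearMap.inl K V W)).map (LinearMap.inl K V W) := by
    rw [LinearMap.ker_domRestrict, Submodule.map_comap_subtype, Submodule.map_comap_eq,
      LinearMap.range_inl, inf_comm]
  have finrank_ker : finrank K (LinearMap.ker ((LinearMap.snd K V W).domRestrict U))
      = finrank K (U.comap (LinearMap.inl K V W)) := by
    rw [← Submodule.finrank_map_subtype_eq, map_ker_eq]
    exact (Submodule.equivMapOfInjective _ LinearMap.inl_injective _).finrank_eq.symm
  rw [← LinearMap.finrank_range_add_finrank_ker ((LinearMap.snd K V W).domRestrict U),
    LinearMap.range_domRestrict, finrank_ker]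

theorem finrank_le_finrank_map_fst_add_finrank_map_snd (U : Submodule K (V × W)) :
    finrank K U ≤ finrank K (U.map (LinearMap.fst K V W))
      + finrank K (U.map (LinearMap.snd K V W)) := by
  have comap_inl_le : U.comap (LinearMap.inl K V W) ≤ U.map (LinearMap.fst K V W) :=
    fun x hx ↦ ⟨(x, 0), hx, rfl⟩
  rw [finrank_eq_finrank_map_snd_add_finrank_comap_inl, add_comm]
  gcongr
  exact Submodule.finrank_mono comap_inl_le

end Finrank

theorem finrank_le_one_of_forall_eq {V : Type*} [AddCommGroup V] [Module (ZMod 2) V]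
    {S : Submodule (ZMod 2) V} (hS : ∀ a ∈ S, ∀ b ∈ S, a = 0 ∨ b = 0 ∨ a = b) :
    finrank (ZMod 2) S ≤ 1 := by
  obtain rfl | hne := eq_or_ne S ⊥
  · simp
  · obtain ⟨v, hvS, hv⟩ := S.exists_mem_ne_zero_of_ne_bot hne
    refine finrank_le_one ⟨v, hvS⟩ fun ⟨w, hwS⟩ ↦ ?_
    obtain rfl | rfl := (hS v hvS w hwS).resolve_left hv
    · exact ⟨0, zero_smul _ _⟩
    · exact ⟨1, one_smul _ _⟩

theorem IsMSubspace.map_equiv {V W : Type*} [AddCommGroup V] [Module (ZMod 2) V] [AddCommGroup W]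
    [Module (ZMod 2) W] {f : W → ZMod 2} (e : V ≃ₗ[ZMod 2] W) {U : Submodule (ZMod 2) V}
    (hU : IsMSubspace (f ∘ e) U) : IsMSubspace f (U.map e.toLinearMap) := by
  rintro _ ⟨a, ha, rfl⟩ _ ⟨b, hb, rfl⟩ x
  simpa [D2] using hU a ha b hb (e.symm x)

/-! ### Generalized Maiorana–McFarland functions -/

/-- The generalized Maiorana–McFarland function `(x, y, z) ↦ g_z x + ⟨y, τ z⟩`, with the inner
product absorbed into the values of `τ`, which are linear functionals on `Y`. -/
def gmm {X Y Z : Type*} [AddCommGroup Y] [Module (ZMod 2) Y] (g : Z → X → ZMod 2)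
    (τ : Z → Dual (ZMod 2) Y) (p : X × Y × Z) : ZMod 2 :=
  g p.2.2 p.1 + τ p.2.2 p.2.1

/-- The Maiorana–McFarland function `(x, y) ↦ ⟨x, π y⟩`, with the inner product absorbed into the
values of `π`, which are linear functionals on `X`. -/
def mm {X Y : Type*} [AddCommGroup X] [Module (ZMod 2) X] (π : Y → Dual (ZMod 2) X)
    (p : X × Y) : ZMod 2 :=
  π p.2 p.1

/-- Second-order derivatives of the vectorial function `π` in two independent directions never
vanish identically; this is property `(P₁)` of the bent function literature. Over `F₂`, two vectors
are dependent exactly when one of them is zero or they are equal. -/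
def HasNonvanishingD2 {Y W : Type*} [AddCommGroup Y] [AddCommGroup W] (π : Y → W) : Prop :=
  ∀ a b, (∀ y, π y + π (y + a) + π (y + b) + π (y + a + b) = 0) → a = 0 ∨ b = 0 ∨ a = b

section MaioranaMcFarland

variable {X Y Z : Type*} [AddCommGroup X] [AddCommGroup Y] [AddCommGroup Z]

theorem isBent_gmm [Module (ZMod 2) Y] [Finite X] [Finite Y] [Finite Z] {g : Z → X → ZMod 2}
    (hg : ∀ z, IsBent (g z)) (τ : Z ≃ Dual (ZMod 2) Y) : IsBent (gmm g τ) := by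
  rw [isBent_iff_isBalanced]
  rintro ⟨a, b, c⟩ habc
  by_cases hc : c = 0
  · subst hc
    by_cases ha : a = 0
    · subst ha
      have hb : b ≠ 0 := by rintro rfl; exact habc rfl
      refine isBalanced_of_forall_snd fun x ↦ isBalanced_of_forall_snd fun y ↦ ?_
      convert isBalanced_equiv_dual_apply τ hb using 2 with z
      simp only [gmm, Prod.mk_add_mk, add_zero, map_add]
      grind
    · refine isBalanced_of_forall_fst fun ⟨y, z⟩ ↦ ?_
      convert (isBent_iff_isBalanced.1 (hg z) a ha).add_const (τ z b) using 2 with x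
      simp only [gmm, Prod.mk_add_mk, add_zero, map_add]
      grind
  · refine isBalanced_of_forall_snd fun x ↦ isBalanced_of_forall_fst fun z ↦ ?_
    have hτ : τ (z + c) - τ z ≠ 0 := by simpa [sub_eq_zero] using hc
    convert (isBalanced_of_dual_ne_zero hτ).add_const
      (g (z + c) (x + a) + g z x + τ (z + c) b) using 2 with y
    simp only [gmm, Prod.mk_add_mk, map_add, LinearMap.sub_apply]
    grind

theorem isBent_mm [Module (ZMod 2) X] [Finite X] [Finite Y] (π : Y ≃ Dual (ZMod 2) X) :
    IsBent (mm π) := by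
  have zero_bent : IsBent fun _ : Unit ↦ (0 : ZMod 2) :=
    fun a ha ↦ absurd (Subsingleton.elim a 0) ha
  have mm_eq : mm π = gmm (fun _ _ ↦ 0) π ∘ (AddEquiv.uniqueProd (N := Unit)).symm := by
    funext p
    simp [gmm, mm]
  rw [mm_eq]
  exact (isBent_gmm (fun _ ↦ zero_bent) π).comp_addEquiv _

variable [Module (ZMod 2) X] [Module (ZMod 2) Y]

theorem IsMSubspace.comap_inl_of_gmm [Module (ZMod 2) Z] {g : Z → X → ZMod 2}
    {τ : Z → Dual (ZMod 2) Y} {U : Submodule (ZMod 2) (X × Y × Z)} (hU : IsMSubspace (gmm g τ) U)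
    (z : Z) : IsMSubspace (g z) (U.comap (LinearMap.inl (ZMod 2) X (Y × Z))) := by
  intro a ha b hb x
  simpa [D2, gmm] using hU _ ha _ hb (x, 0, z)

theorem finrank_map_snd_le_one_of_isMSubspace_mm {π : Y → Dual (ZMod 2) X}
    (hπ : HasNonvanishingD2 π) {U : Submodule (ZMod 2) (X × Y)} (hU : IsMSubspace (mm π) U) :
    finrank (ZMod 2) (U.map (LinearMap.snd (ZMod 2) X Y)) ≤ 1 := by
  refine finrank_le_one_of_forall_eq ?_
  rintro _ ⟨⟨a₁, a₂⟩, ha, rfl⟩ _ ⟨⟨b₁, b₂⟩, hb, rfl⟩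
  refine hπ a₂ b₂ fun y ↦ LinearMap.ext fun x ↦ ?_
  -- The second-order derivative is affine in `x`; this is its linear part.
  have at_x := hU _ ha _ hb (x, y)
  have at_zero := hU _ ha _ hb (0, y)
  simp only [D2, mm, Prod.mk_add_mk, map_add, map_zero] at at_x at_zero
  simp only [LinearMap.add_apply, LinearMap.zero_apply]
  linear_combination at_x - at_zero

theorem finrank_le_two_of_isMSubspace_mm_of_isMSubspace_mm_swap [Finite X] [Finite Y]
    {π : Y → Dual (ZMod 2) X} (hπ : HasNonvanishingD2 π) {σ : X → Dual (ZMod 2) Y}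
    (hσ : HasNonvanishingD2 σ) {U : Submodule (ZMod 2) (X × Y)} (hUπ : IsMSubspace (mm π) U)
    (hUσ : IsMSubspace (mm σ ∘ Prod.swap) U) : finrank (ZMod 2) U ≤ 2 := by
  let swap := LinearEquiv.prodComm (ZMod 2) X Y
  have fst_le_one : finrank (ZMod 2) (U.map (LinearMap.fst (ZMod 2) X Y)) ≤ 1 := by
    have := finrank_map_snd_le_one_of_isMSubspace_mm hσ (hUσ.map_equiv swap)
    rwa [← Submodule.map_comp] at this
  have snd_le_one := finrank_map_snd_le_one_of_isMSubspace_mm hπ hUπ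
  have := finrank_le_finrank_map_fst_add_finrank_map_snd U
  lia

end MaioranaMcFarland

/-! ### The inversion map -/

section Inversion

theorem hasNonvanishingD2_inv {F : Type*} [Field F] [CharP F 2] (hF : 4 < Cardinal.mk F) :
    HasNonvanishingD2 fun x : F ↦ x⁻¹ := by
  intro a b h
  obtain ⟨x, hx⟩ := Cardinal.exists_notMem_of_length_lt [0, a, b, a + b] hF
  simp only [List.mem_cons, List.not_mem_nil, or_false, not_or] at hx
  obtain ⟨hx, hxa, hxb, hxab⟩ := hx
  rw [← Ne, ← sub_ne_zero, CharTwo.sub_eq_add] at hxa hxb hxab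
  rw [← add_assoc] at hxab
  have sum_inv_eq : x⁻¹ + (x + a)⁻¹ + (x + b)⁻¹ + (x + a + b)⁻¹
      = a * b * (a + b) / (x * (x + a) * (x + b) * (x + a + b)) := by
    field_simp
    linear_combination (x * (x + b) * (x + a + b) + (x + a + b) * x * (x + a) + a * b * x)
      * (CharTwo.two_eq_zero : (2 : F) = 0)
  simpa [sum_inv_eq, hx, hxa, hxb, hxab, CharTwo.add_eq_zero, or_assoc] using h x

theorem HasNonvanishingD2.addMonoidHom_comp {Y W W' : Type*} [AddCommGroup Y] [AddCommGroup W]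
    [AddCommGroup W'] {π : Y → W} (hπ : HasNonvanishingD2 π) {φ : W →+ W'}
    (hφ : Function.Injective φ) : HasNonvanishingD2 (φ ∘ π) := fun a b h ↦
  hπ a b fun y ↦ (map_eq_zero_iff φ hφ).1 (by simpa using h y)

theorem pow_card_sub_two_eq_inv {F : Type*} [Field F] [Finite F] (hF : 2 < Nat.card F) (x : F) :
    x ^ (Nat.card F - 2) = x⁻¹ := by
  obtain rfl | hx := eq_or_ne x 0
  · rw [zero_pow (by lia), inv_zero]
  · have := Fintype.ofFinite F
    refine eq_inv_of_mul_eq_one_left ?_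
    rw [← pow_succ, ← FiniteField.pow_card_sub_one_eq_one x hx, Fintype.card_eq_nat_card]
    congr 1
    lia

variable (K L : Type*) [Field K] [Field L] [Algebra K L] [FiniteDimensional K L]
  [Algebra.IsSeparable K L]

/-- The identification `a ↦ (x ↦ Tr (a x))` of a finite separable extension with its dual. -/
noncomputable def traceDual : L ≃ₗ[K] Dual K L :=
  (Algebra.traceForm K L).toDual (traceForm_nondegenerate K L)

theorem traceDual_apply (a x : L) : traceDual K L a x = Algebra.trace K L (a * x) :=
  rfl

/-- The inversion map `a ↦ a⁻¹`, as the map `a ↦ (x ↦ Tr (a⁻¹ x))` into the dual. At `0` it takes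
the value `0`, by the convention `0⁻¹ = 0`. -/
noncomputable def inversionDual : L ≃ Dual K L :=
  (Equiv.inv L).trans (traceDual K L).toEquiv

theorem inversionDual_apply (a x : L) : inversionDual K L a x = Algebra.trace K L (a⁻¹ * x) :=
  rfl

theorem hasNonvanishingD2_inversionDual [CharP L 2] (hL : 4 < Cardinal.mk L) :
    HasNonvanishingD2 (inversionDual K L) :=
  (hasNonvanishingD2_inv hL).addMonoidHom_comp (φ := (traceDual K L : L →+ Dual K L))
    (traceDual K L).injective

end Inversion

theorem GMM_inversion_bent_outside_MM_general {X₁ X₂ Y Z : Type*}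
    [AddCommGroup X₁] [Module (ZMod 2) X₁] [Finite X₁] [AddCommGroup X₂] [Module (ZMod 2) X₂]
    [Finite X₂] [AddCommGroup Y] [Module (ZMod 2) Y] [Finite Y] [AddCommGroup Z]
    [Module (ZMod 2) Z] [Finite Z] (π : X₂ ≃ Dual (ZMod 2) X₁) (hπ : HasNonvanishingD2 π)
    (σ : X₁ ≃ Dual (ZMod 2) X₂) (hσ : HasNonvanishingD2 σ) (τ : Z ≃ Dual (ZMod 2) Y)
    (s : Z → Prop) [DecidablePred s] (hs : ∃ z, s z) (hs' : ∃ z, ¬s z)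
    (f : X₁ × X₂ × Y × Z → ZMod 2)
    (hf : ∀ x₁ x₂ y z, f (x₁, x₂, y, z) = (if s z then π x₂ x₁ else σ x₁ x₂) + τ z y) :
    IsBent f ∧ ∀ U : Submodule (ZMod 2) (X₁ × X₂ × Y × Z), IsMSubspace f U →
      finrank (ZMod 2) U ≤ finrank (ZMod 2) Y + finrank (ZMod 2) Z + 2 := by
  let assoc := LinearEquiv.prodAssoc (ZMod 2) X₁ X₂ (Y × Z)
  let g : Z → X₁ × X₂ → ZMod 2 := fun z ↦ if s z then mm π else mm σ ∘ Prod.swap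
  have g_of_s {z} (hz : s z) : g z = mm π := if_pos hz
  have g_of_not_s {z} (hz : ¬s z) : g z = mm σ ∘ Prod.swap := if_neg hz
  obtain rfl : f = gmm g τ ∘ assoc.symm := by
    funext ⟨x₁, x₂, y, z⟩
    change f (x₁, x₂, y, z) = g z (x₁, x₂) + τ z y
    by_cases hz : s z <;> simp [hf, mm, g, hz]
  refine ⟨(isBent_gmm (fun z ↦ ?_) τ).comp_addEquiv assoc.symm.toAddEquiv, fun U hU ↦ ?_⟩
  · by_cases hz : s z
    · exact g_of_s hz ▸ isBent_mm π
    · exact g_of_not_s hz ▸ (isBent_mm σ).comp_addEquiv AddEquiv.prodComm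
  · obtain ⟨z, hz⟩ := hs
    obtain ⟨z', hz'⟩ := hs'
    have hV := hU.map_equiv assoc.symm
    have comap_le_two := finrank_le_two_of_isMSubspace_mm_of_isMSubspace_mm_swap hπ hσ
      (g_of_s hz ▸ hV.comap_inl_of_gmm z) (g_of_not_s hz' ▸ hV.comap_inl_of_gmm z')
    calc finrank (ZMod 2) U
        = finrank (ZMod 2) (U.map assoc.symm.toLinearMap) := (assoc.symm.finrank_map_eq U).symm
      _ ≤ finrank (ZMod 2) (Y × Z) + 2 := by
        rw [finrank_eq_finrank_map_snd_add_finrank_comap_inl]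
        exact add_le_add (Submodule.finrank_le _) comap_le_two
      _ = finrank (ZMod 2) Y + finrank (ZMod 2) Z + 2 := by rw [finrank_prod]

/-- Corollary 3.9: the generalized Maiorana–McFarland function built from the two
Maiorana–McFarland functions `Tr(x₁ x₂^{2^m-2})` and `Tr(x₂ x₁^{2^m-2})` is a bent
function with no `M`-subspace of dimension `m + k`, hence lies outside the completed
Maiorana–McFarland class. -/
theorem GMM_inversion_bent_outside_MM
    (m k : ℕ) (hk : 0 < k) (hm : 4 ≤ m) (hmk : m > k + 2)
    (f : GaloisField 2 m × GaloisField 2 m × GaloisField 2 k × GaloisField 2 k → ZMod 2)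
    (hf : ∀ (x₁ x₂ : GaloisField 2 m) (y z : GaloisField 2 k),
      f (x₁, x₂, y, z) =
        (if Tr k z = 0 then Tr m (x₁ * x₂ ^ (2 ^ m - 2)) else Tr m (x₂ * x₁ ^ (2 ^ m - 2)))
          + Tr k (y * z)) :
    IsBent f ∧
    ∀ U : Submodule (ZMod 2)
        (GaloisField 2 m × GaloisField 2 m × GaloisField 2 k × GaloisField 2 k),
      IsMSubspace f U → Module.finrank (ZMod 2) U < m + k := by
  have card_eq : Nat.card (GaloisField 2 m) = 2 ^ m := GaloisField.card 2 m (by lia)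
  have four_lt : 4 < Nat.card (GaloisField 2 m) :=
    card_eq ▸ (by norm_num : 4 < 2 ^ 4).trans_le (Nat.pow_le_pow_right two_pos hm)
  have pow_eq_inv (x : GaloisField 2 m) : x ^ (2 ^ m - 2) = x⁻¹ :=
    card_eq ▸ pow_card_sub_two_eq_inv (by lia) x
  have inversion_nonvanishing : HasNonvanishingD2 (inversionDual (ZMod 2) (GaloisField 2 m)) :=
    hasNonvanishingD2_inversionDual _ _ (by rw [← Nat.cast_card]; exact_mod_cast four_lt)
  obtain ⟨bent, finrank_le⟩ := GMM_inversion_bent_outside_MM_general _ inversion_nonvanishing _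
    inversion_nonvanishing (traceDual (ZMod 2) (GaloisField 2 k)).toEquiv (Tr k · = 0)
    ⟨0, map_zero _⟩ (DFunLike.ne_iff.1 (Algebra.trace_ne_zero (ZMod 2) (GaloisField 2 k))) f
    fun x₁ x₂ y z ↦ by
      simp only [hf, pow_eq_inv, Tr, inversionDual_apply, traceDual_apply, mul_comm,
        LinearEquiv.coe_toEquiv]
  refine ⟨bent, fun U hU ↦ (finrank_le U hU).trans_lt ?_⟩
  rw [GaloisField.finrank 2 hk.ne']
  lia
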